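/- arXiv:math/0702036 — 3 statements merged into one kernel-verified Lean document; each statement's English description precedes it below -/
import Mathlib

section
/- There exist constants c > 0 and s > 0, independent of n, such that if the matching score of two ones satisfies S ≥ s, then the variance of the optimal alignment score satisfies Var[L_n] ≥ c·n for all n ∈ ℕ. -/
/-!
For any statistic `T` of mean zero, Cauchy-Schwarz gives `Var L ≥ (E[L T])² / E[T²]`. Here
`T = ∑ i, (1 - 4 · 1{X i = Y i = 0})` (`tauSum`), a sum of `n` independent centred variables of
variance `3`, so `E[T²] = 3 n`, and it remains to see that `E[L T] ≥ n` when `S ≥ 12`.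

Fix a position `i`. Conditionally on `X i = Y i = 0`, delete position `i` from both strings and
append a fresh fair letter to each. The result is again a uniform pair of strings. The deletion
destroys at most two matched pairs, each worth at most `1`, and the appended letters can be matched
to each other, which gains `S` with probability `1 / 4` (`optScore_shift`). Therefore
`E[L] ≥ E[L | X i = Y i = 0] + S / 4 - 2`, that is
`E[L (1 - 4 · 1{X i = Y i = 0})] ≥ S / 4 - 2 ≥ 1` (`sum_optScore_tau`). Summing over `i` gives the
claim with `c = 1 / 3`.
-/

open scoped Classical
open Finset

noncomputable section

/-- Score of aligning two letters (`true` = 1, `false` = 0):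
`s(1,1) = S`, `s(0,0) = 1`, `s(1,0) = s(0,1) = 0`. -/
def letterScore (S : ℝ) (a b : Bool) : ℝ :=
  if a = true ∧ b = true then S else if a = false ∧ b = false then 1 else 0

/-- Score of the alignment `(π, ν)` of the strings `x` and `y`. -/
def alignScore (S : ℝ) {n k : ℕ} (x y : Fin n → Bool) (π ν : Fin k → Fin n) : ℝ :=
  ∑ i : Fin k, letterScore S (x (π i)) (y (ν i))

/-- The optimal alignment score of two binary strings of length `n`. -/
def optScore (S : ℝ) (n : ℕ) (x y : Fin n → Bool) : ℝ :=
  sSup {r : ℝ | ∃ (k : ℕ) (π ν : Fin k → Fin n),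
    StrictMono π ∧ StrictMono ν ∧ r = alignScore S x y π ν}

/-- The string `x`, extended by the (neutral) letter `true` outside `[0, n)`. -/
def ext {n : ℕ} (x : Fin n → Bool) : ℕ → Bool :=
  fun j => if h : j < n then x ⟨j, h⟩ else true

/-- `blockStart x ℓ i` holds iff a block of zeros of length `ℓ` of `x` starts at position `i`:
positions `i, …, i+ℓ-1` carry zeros, and they are delimited by ones (or the ends of `x`). -/
def blockStart {n : ℕ} (x : Fin n → Bool) (ℓ i : ℕ) : Prop :=
  0 < ℓ ∧ i + ℓ ≤ n ∧ (∀ j ∈ Finset.Ico i (i + ℓ), ext x j = false) ∧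
    (i = 0 ∨ ext x (i - 1) = true) ∧ ext x (i + ℓ) = true

/-- The set of starting positions of blocks of zeros of length `ℓ` in `x`. -/
def starts {n : ℕ} (x : Fin n → Bool) (ℓ : ℕ) : Finset ℕ :=
  (Finset.range n).filter fun i => blockStart x ℓ i

/-- The number of blocks of zeros of length `ℓ` in `x`. -/
def numBlocks {n : ℕ} (x : Fin n → Bool) (ℓ : ℕ) : ℕ := (starts x ℓ).card

/-- Probability of an event under a uniform random binary string of length `n`. -/
def probX (n : ℕ) (E : (Fin n → Bool) → Prop) : ℝ :=
  ((Finset.univ.filter E).card : ℝ) / 2 ^ n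

/-- Probability of an event under two independent uniform random binary strings of length `n`. -/
def probXY (n : ℕ) (E : (Fin n → Bool) → (Fin n → Bool) → Prop) : ℝ :=
  ((Finset.univ.filter (fun p : (Fin n → Bool) × (Fin n → Bool) => E p.1 p.2)).card : ℝ) / 4 ^ n

/-- Expectation of a function of a uniform random binary string of length `n`. -/
def expX (n : ℕ) (f : (Fin n → Bool) → ℝ) : ℝ := (∑ x, f x) / 2 ^ n

/-- Expectation of a function of two independent uniform random binary strings of length `n`. -/
def expXY (n : ℕ) (f : (Fin n → Bool) → (Fin n → Bool) → ℝ) : ℝ := (∑ x, ∑ y, f x y) / 4 ^ n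

/-- The string obtained from `x` by removing one zero from the block of zeros starting at `p`
and inserting one extra zero into the block of zeros starting at `q`. -/
def modifyStr {n : ℕ} (x : Fin n → Bool) (p q : ℕ) : Fin n → Bool :=
  fun i => (((List.ofFn x).eraseIdx p).insertIdx (if p < q then q - 1 else q) false).getD i false

/-- The variance of the optimal alignment score `L_n` of two independent uniform
binary strings of length `n`. -/
def varL (S : ℝ) (n : ℕ) : ℝ :=
  expXY n (fun x y => (optScore S n x y - expXY n (optScore S n)) ^ 2)

/-! ### Elementary facts about the optimal score -/

lemma letterScore_nonneg {S : ℝ} (hS : 0 ≤ S) (a b : Bool) : 0 ≤ letterScore S a b := by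
  cases a <;> cases b <;> simp [letterScore, hS]

lemma letterScore_le {S : ℝ} (hS : 0 ≤ S) (a b : Bool) : letterScore S a b ≤ S + 1 := by
  cases a <;> cases b <;> simp [letterScore] <;> linarith

lemma alignScore_le {S : ℝ} (hS : 0 ≤ S) {n k : ℕ} (x y : Fin n → Bool) (π ν : Fin k → Fin n)
    (hπ : StrictMono π) : alignScore S x y π ν ≤ n * (S + 1) := by
  have hk : k ≤ n := by simpa using Fintype.card_le_of_injective π hπ.injective
  calc alignScore S x y π ν ≤ ∑ _i : Fin k, (S + 1) :=
        Finset.sum_le_sum fun i _ => letterScore_le hS _ _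
    _ = k * (S + 1) := by rw [Finset.sum_const, card_univ, Fintype.card_fin, nsmul_eq_mul]
    _ ≤ n * (S + 1) := by gcongr

lemma alignScore_le_optScore {S : ℝ} (hS : 0 ≤ S) {n k : ℕ} (x y : Fin n → Bool)
    (π ν : Fin k → Fin n) (hπ : StrictMono π) (hν : StrictMono ν) :
    alignScore S x y π ν ≤ optScore S n x y := by
  refine le_csSup ⟨n * (S + 1), ?_⟩ ⟨k, π, ν, hπ, hν, rfl⟩
  rintro r ⟨k, π, ν, hπ, -, rfl⟩
  exact alignScore_le hS x y π ν hπ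

lemma optScore_le {S : ℝ} {n : ℕ} {x y : Fin n → Bool} {C : ℝ}
    (h : ∀ (k : ℕ) (π ν : Fin k → Fin n), StrictMono π → StrictMono ν →
      alignScore S x y π ν ≤ C) : optScore S n x y ≤ C := by
  refine csSup_le ⟨_, 0, Fin.elim0, Fin.elim0, fun i => i.elim0, fun i => i.elim0, rfl⟩ ?_
  rintro r ⟨k, π, ν, hπ, hν, rfl⟩
  exact h k π ν hπ hν

/-! ### Removing a common zero and appending a pair of letters -/

/-- The letters of a strictly monotone (one-sided) alignment that avoid position `i`, followed by
a new last letter, again form a strictly monotone map. -/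
lemma exists_strictMono_append {m k l : ℕ} (i : Fin (m + 1)) (π : Fin k → Fin (m + 1))
    (hπ : StrictMono π) (e : Fin l → Fin k) (he : StrictMono e) (hi : ∀ j, π (e j) ≠ i) :
    ∃ q : Fin l → Fin m, (∀ j, i.succAbove (q j) = π (e j)) ∧
      StrictMono (Fin.snoc (α := fun _ => Fin (m + 1)) (fun j => (q j).castSucc) (Fin.last m)) := by
  choose q hq using fun j => Fin.exists_succAbove_eq (hi j)
  refine ⟨q, hq, ?_⟩
  have hqm : StrictMono q := by
    intro j j' hjj
    rw [← (Fin.strictMono_succAbove i).lt_iff_lt, hq, hq]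
    exact hπ (he hjj)
  intro a b
  refine Fin.lastCases (fun h => ?_) (fun b h => ?_) b
  · refine Fin.lastCases (fun h => absurd h (lt_irrefl _)) (fun a _ => ?_) a h
    simp
  · revert h
    refine Fin.lastCases (fun h => ?_) (fun a h => ?_) a
    · exact absurd h (not_lt.2 (Fin.le_last _))
    · simpa using hqm (Fin.castSucc_lt_castSucc_iff.1 h)

/-- Replacing a zero at the same position `i` of both strings by letters `a`, `b` appended at the
end costs at most `2` (at most two matched pairs of zeros are destroyed) and gains `s(a, b)`. -/
lemma optScore_shift {S : ℝ} (hS : 0 ≤ S) {m : ℕ} (i : Fin (m + 1)) (u v : Fin m → Bool)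
    (a b : Bool) :
    optScore S (m + 1) (i.insertNth (α := fun _ => Bool) false u)
        (i.insertNth (α := fun _ => Bool) false v) + letterScore S a b - 2 ≤
      optScore S (m + 1) ((Fin.last m).insertNth (α := fun _ => Bool) a u)
        ((Fin.last m).insertNth (α := fun _ => Bool) b v) := by
  suffices h : optScore S (m + 1) (i.insertNth (α := fun _ => Bool) false u)
        (i.insertNth (α := fun _ => Bool) false v) ≤
      optScore S (m + 1) ((Fin.last m).insertNth (α := fun _ => Bool) a u)
        ((Fin.last m).insertNth (α := fun _ => Bool) b v) - letterScore S a b + 2 by linarith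
  refine optScore_le fun k π ν hπ hν => ?_
  set x' : Fin (m + 1) → Bool := (Fin.last m).insertNth (α := fun _ => Bool) a u with hx'
  set y' : Fin (m + 1) → Bool := (Fin.last m).insertNth (α := fun _ => Bool) b v with hy'
  set x : Fin (m + 1) → Bool := i.insertNth (α := fun _ => Bool) false u with hx
  set y : Fin (m + 1) → Bool := i.insertNth (α := fun _ => Bool) false v with hy
  -- The matched pairs not using position `i` in either string survive.
  set s : Finset (Fin k) := univ.filter fun j => π j ≠ i ∧ ν j ≠ i with hs
  set e := s.orderEmbOfFin rfl with he
  have hmem : ∀ j, π (e j) ≠ i ∧ ν (e j) ≠ i := fun j => by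
    exact (Finset.mem_filter.1 (s.orderEmbOfFin_mem rfl j)).2
  obtain ⟨p, hp, hpm⟩ := exists_strictMono_append i π hπ e e.strictMono fun j => (hmem j).1
  obtain ⟨q, hq, hqm⟩ := exists_strictMono_append i ν hν e e.strictMono fun j => (hmem j).2
  have h1 := alignScore_le_optScore hS x' y' _ _ hpm hqm
  have hx'c : ∀ r : Fin m, x' r.castSucc = u r := fun r => by
    rw [← Fin.succAbove_last_apply, hx', Fin.insertNth_apply_succAbove]
  have hy'c : ∀ r : Fin m, y' r.castSucc = v r := fun r => by
    rw [← Fin.succAbove_last_apply, hy', Fin.insertNth_apply_succAbove]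
  have hx'l : x' (Fin.last m) = a := Fin.insertNth_apply_same (α := fun _ => Bool) _ _ _
  have hy'l : y' (Fin.last m) = b := Fin.insertNth_apply_same (α := fun _ => Bool) _ _ _
  have hxs : ∀ r : Fin m, x (i.succAbove r) = u r := fun r =>
    Fin.insertNth_apply_succAbove (α := fun _ => Bool) _ _ _ _
  have hys : ∀ r : Fin m, y (i.succAbove r) = v r := fun r =>
    Fin.insertNth_apply_succAbove (α := fun _ => Bool) _ _ _ _
  have hxi : x i = false := Fin.insertNth_apply_same (α := fun _ => Bool) _ _ _
  have hyi : y i = false := Fin.insertNth_apply_same (α := fun _ => Bool) _ _ _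
  have h2 : alignScore S x' y'
      (Fin.snoc (α := fun _ => Fin (m + 1)) (fun j => (p j).castSucc) (Fin.last m))
      (Fin.snoc (α := fun _ => Fin (m + 1)) (fun j => (q j).castSucc) (Fin.last m)) =
      (∑ j ∈ s, letterScore S (x (π j)) (y (ν j))) + letterScore S a b := by
    rw [alignScore, Fin.sum_univ_castSucc]
    simp only [Fin.snoc_castSucc, Fin.snoc_last, hx'c, hy'c, hx'l, hy'l]
    congr 1
    have hmap := (Finset.sum_map univ e.toEmbedding fun j => letterScore S (x (π j)) (y (ν j))).symm
    rw [he, s.map_orderEmbOfFin_univ rfl] at hmap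
    rw [← hmap]
    refine Finset.sum_congr rfl fun j _ => ?_
    change _ = letterScore S (x (π (e j))) (y (ν (e j)))
    rw [← hp, ← hq, hxs, hys]
  have h3 : ∑ j ∈ sᶜ, letterScore S (x (π j)) (y (ν j)) ≤ 2 := by
    have hle : ∀ j ∈ sᶜ, letterScore S (x (π j)) (y (ν j)) ≤ 1 := by
      intro j hj
      have : π j = i ∨ ν j = i := by
        by_contra hcon
        push Not at hcon
        simp [hs, hcon] at hj
      rcases this with h | h
      · rw [h, hxi]; simp only [letterScore]; split_ifs <;> simp_all
      · rw [h, hyi]; simp only [letterScore]; split_ifs <;> simp_all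
    have hsub : sᶜ ⊆ (univ.filter fun j => π j = i) ∪ (univ.filter fun j => ν j = i) := by
      intro j hj
      by_contra hcon
      simp_all
    have hc : (sᶜ).card ≤ 2 := by
      refine (card_le_card hsub).trans ((card_union_le _ _).trans ?_)
      have e1 : (univ.filter fun j => π j = i).card ≤ 1 := card_le_one.2 fun c hc d hd =>
        hπ.injective (by simp_all)
      have e2 : (univ.filter fun j => ν j = i).card ≤ 1 := card_le_one.2 fun c hc d hd =>
        hν.injective (by simp_all)
      omega
    calc _ ≤ ∑ _j ∈ sᶜ, (1 : ℝ) := Finset.sum_le_sum hle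
      _ = ((sᶜ).card : ℝ) := by simp
      _ ≤ 2 := by exact_mod_cast hc
  have h4 : alignScore S x y π ν = (∑ j ∈ s, letterScore S (x (π j)) (y (ν j))) +
      ∑ j ∈ sᶜ, letterScore S (x (π j)) (y (ν j)) := (Finset.sum_add_sum_compl s _).symm
  linarith

/-! ### The test statistic -/

/-- The centred and rescaled indicator that both letters are zero: it has mean `0` and second
moment `3` under two independent fair letters. -/
def tau (a b : Bool) : ℝ := if a = false ∧ b = false then -3 else 1

/-- The test statistic `∑ i, tau (x i) (y i)`, which is `n - 4 · #{i | x i = y i = 0}`. -/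
def tauSum {n : ℕ} (x y : Fin n → Bool) : ℝ := ∑ i, tau (x i) (y i)

/-- Summation over pairs of strings by singling out the letters at position `i`. -/
lemma sum_insertNth {m : ℕ} (i : Fin (m + 1)) (f : (Fin (m + 1) → Bool) → (Fin (m + 1) → Bool) → ℝ) :
    ∑ x, ∑ y, f x y = ∑ u : Fin m → Bool, ∑ v : Fin m → Bool, ∑ a : Bool, ∑ b : Bool,
      f (i.insertNth (α := fun _ => Bool) a u) (i.insertNth (α := fun _ => Bool) b v) := by
  have key : ∀ g : (Fin (m + 1) → Bool) → ℝ, ∑ x, g x =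
      ∑ u : Fin m → Bool, ∑ a : Bool, g (i.insertNth (α := fun _ => Bool) a u) := by
    intro g
    rw [← (Fin.insertNthEquiv (fun _ => Bool) i).sum_comp, Fintype.sum_prod_type_right]
    rfl
  rw [key]
  refine Finset.sum_congr rfl fun u _ => ?_
  simp_rw [key]
  rw [Finset.sum_comm]

lemma sum_tau {n : ℕ} (i : Fin n) :
    ∑ x : Fin n → Bool, ∑ y : Fin n → Bool, tau (x i) (y i) = 0 := by
  obtain _ | m := n
  · exact i.elim0
  · rw [sum_insertNth i]
    simp [tau]
    ring

lemma sum_tau_sq {n : ℕ} (i : Fin n) :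
    ∑ x : Fin n → Bool, ∑ y : Fin n → Bool, tau (x i) (y i) * tau (x i) (y i) = 3 * 4 ^ n := by
  obtain _ | m := n
  · exact i.elim0
  · rw [sum_insertNth i]
    simp [tau]
    rw [show (4 : ℝ) = 2 * 2 by norm_num, pow_succ, mul_pow]
    ring

lemma sum_tau_mul {n : ℕ} {i j : Fin n} (hij : j ≠ i) :
    ∑ x : Fin n → Bool, ∑ y : Fin n → Bool, tau (x i) (y i) * tau (x j) (y j) = 0 := by
  obtain _ | m := n
  · exact i.elim0
  · obtain ⟨r, rfl⟩ := Fin.exists_succAbove_eq hij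
    rw [sum_insertNth i]
    refine Finset.sum_eq_zero fun u _ => Finset.sum_eq_zero fun v _ => ?_
    simp [tau]
    split_ifs <;> norm_num

lemma sum_tauSum (n : ℕ) : ∑ x : Fin n → Bool, ∑ y : Fin n → Bool, tauSum x y = 0 := by
  have : ∀ x : Fin n → Bool, ∑ y : Fin n → Bool, tauSum x y =
      ∑ i, ∑ y : Fin n → Bool, tau (x i) (y i) :=
    fun x => Finset.sum_comm
  simp_rw [this]
  rw [Finset.sum_comm]
  exact Finset.sum_eq_zero fun i _ => sum_tau i

lemma sum_tauSum_sq (n : ℕ) :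
    ∑ x : Fin n → Bool, ∑ y : Fin n → Bool, tauSum x y ^ 2 = n * (3 * 4 ^ n) := by
  have h : ∀ x : Fin n → Bool, ∑ y : Fin n → Bool, tauSum x y ^ 2 =
      ∑ i, ∑ j, ∑ y : Fin n → Bool, tau (x i) (y i) * tau (x j) (y j) := by
    intro x
    simp_rw [tauSum, sq, Finset.sum_mul_sum]
    rw [Finset.sum_comm]
    exact Finset.sum_congr rfl fun i _ => Finset.sum_comm
  simp_rw [h]
  rw [Finset.sum_comm]
  have h' : ∀ i : Fin n, ∑ x : Fin n → Bool, ∑ j, ∑ y : Fin n → Bool,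
      tau (x i) (y i) * tau (x j) (y j) = 3 * 4 ^ n := by
    intro i
    rw [Finset.sum_comm, Finset.sum_eq_single i (fun j _ hj => sum_tau_mul hj) (by simp)]
    exact sum_tau_sq i
  simp [h']

/-- The covariance of the optimal score with each summand of the test statistic is at least
`S / 4 - 2`; stated for sums over all pairs of strings, hence the factor `4 ^ n`. -/
lemma sum_optScore_tau {S : ℝ} (hS : 0 ≤ S) {n : ℕ} (i : Fin n) :
    (S / 4 - 2) * 4 ^ n ≤
      ∑ x : Fin n → Bool, ∑ y : Fin n → Bool, optScore S n x y * tau (x i) (y i) := by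
  obtain _ | m := n
  · exact i.elim0
  -- `A` sums the score over pairs with common zero at `i`, and `B` over all pairs, so that the
  -- right-hand side is `B - 4 * A`.
  set A := ∑ u : Fin m → Bool, ∑ v : Fin m → Bool, optScore S (m + 1)
    (i.insertNth (α := fun _ => Bool) false u) (i.insertNth (α := fun _ => Bool) false v) with hA
  set B := ∑ x : Fin (m + 1) → Bool, ∑ y : Fin (m + 1) → Bool, optScore S (m + 1) x y with hB
  have h1 : ∑ x : Fin (m + 1) → Bool, ∑ y : Fin (m + 1) → Bool,
      optScore S (m + 1) x y * tau (x i) (y i) = B - 4 * A := by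
    rw [hB, sum_insertNth i, sum_insertNth i, hA]
    simp_rw [Finset.mul_sum, ← Finset.sum_sub_distrib]
    refine Finset.sum_congr rfl fun u _ => Finset.sum_congr rfl fun v _ => ?_
    simp [tau]
    ring
  have h2 : 4 * A + (S - 7) * 4 ^ m ≤ B := by
    have hcard : (4 : ℝ) ^ m = ∑ _u : Fin m → Bool, ∑ _v : Fin m → Bool, (1 : ℝ) := by
      simp [← mul_pow]
      norm_num
    rw [hB, sum_insertNth (Fin.last m), hA, hcard]
    simp_rw [Finset.mul_sum, ← Finset.sum_add_distrib]
    refine Finset.sum_le_sum fun u _ => Finset.sum_le_sum fun v _ => ?_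
    have e1 := optScore_shift hS i u v true true
    have e2 := optScore_shift hS i u v true false
    have e3 := optScore_shift hS i u v false true
    have e4 := optScore_shift hS i u v false false
    simp [letterScore] at e1 e2 e3 e4
    simp
    linarith
  rw [h1, pow_succ]
  have : (0 : ℝ) < 4 ^ m := by positivity
  linarith

/-- there exist constants `c > 0` and `s > 0`, independent of `n`, such that
if `S ≥ s` then `Var[L_n] ≥ c · n` for all `n ∈ ℕ`. -/
theorem variance_linear_lower_bound :
    ∃ c > (0 : ℝ), ∃ s > (0 : ℝ), ∀ S : ℝ, s ≤ S → ∀ n : ℕ, c * n ≤ varL S n := by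
  refine ⟨1 / 3, by norm_num, 12, by norm_num, fun S hS n => ?_⟩
  set μ := expXY n (optScore S n) with hμ
  -- The covariance of the score with the test statistic.
  have hcov : (n : ℝ) * 4 ^ n ≤
      ∑ x : Fin n → Bool, ∑ y : Fin n → Bool, (optScore S n x y - μ) * tauSum x y := by
    have e1 : ∑ x : Fin n → Bool, ∑ y : Fin n → Bool, (optScore S n x y - μ) * tauSum x y =
        ∑ i, ∑ x : Fin n → Bool, ∑ y : Fin n → Bool, optScore S n x y * tau (x i) (y i) := by
      simp_rw [sub_mul, Finset.sum_sub_distrib]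
      simp_rw [← Finset.mul_sum, sum_tauSum, mul_zero, sub_zero]
      symm
      rw [Finset.sum_comm]
      refine Finset.sum_congr rfl fun x _ => ?_
      rw [Finset.sum_comm]
      exact Finset.sum_congr rfl fun y _ => (Finset.mul_sum _ _ _).symm
    have e2 : ∑ _i : Fin n, (4 : ℝ) ^ n ≤ ∑ i : Fin n, ∑ x : Fin n → Bool, ∑ y : Fin n → Bool,
        optScore S n x y * tau (x i) (y i) :=
      Finset.sum_le_sum fun i _ => le_trans
        (le_mul_of_one_le_left (by positivity) (by linarith)) (sum_optScore_tau (by linarith) i)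
    rw [e1]
    simpa using e2
  have hCS : (∑ x : Fin n → Bool, ∑ y : Fin n → Bool, (optScore S n x y - μ) * tauSum x y) ^ 2 ≤
      (∑ x : Fin n → Bool, ∑ y : Fin n → Bool, (optScore S n x y - μ) ^ 2) *
        (n * (3 * 4 ^ n)) := by
    rw [← sum_tauSum_sq n]
    have := Finset.sum_mul_sq_le_sq_mul_sq (univ : Finset ((Fin n → Bool) × (Fin n → Bool)))
      (fun p => optScore S n p.1 p.2 - μ) (fun p => tauSum p.1 p.2)
    simpa only [Fintype.sum_prod_type] using this
  have hvar : varL S n =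
      (∑ x : Fin n → Bool, ∑ y : Fin n → Bool, (optScore S n x y - μ) ^ 2) / 4 ^ n := rfl
  rw [hvar, le_div_iff₀ (by positivity)]
  set V := ∑ x : Fin n → Bool, ∑ y : Fin n → Bool, (optScore S n x y - μ) ^ 2 with hV
  have hV0 : 0 ≤ V := Finset.sum_nonneg fun x _ => Finset.sum_nonneg fun y _ => sq_nonneg _
  rcases Nat.eq_zero_or_pos n with hn | hn
  · simpa [hn] using hV0
  have hpos : (0 : ℝ) < n * 4 ^ n := by positivity
  have h := (pow_le_pow_left₀ hpos.le hcov 2).trans hCS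
  have h' : (n : ℝ) * 4 ^ n * (n * 4 ^ n) ≤ 3 * V * (n * 4 ^ n) := by linarith
  linarith [le_of_mul_le_mul_right h' hpos]
end
end

section
/- Let m⃗ = (m₁, m₂, m₄, m₅) ∈ ℕ⁴ with m₁ ≥ 1, m₅ ≥ 1 and such that the set of binary strings x of length n with N⃗(x) = m⃗ is nonempty. Let X' be uniformly distributed on the set of binary strings x of length n with N⃗(x) = m⃗, and let X'' be obtained from X' by choosing uniformly at random one block of zeros of length 5 in X' and removing one zero from it, and choosing uniformly at random one block of zeros of length 1 in X' and extending it by the removed zero. Then X'' is uniformly distributed on the set of binary strings x of length n with N⃗(x) = m⃗ + e⃗, where e⃗ = (−1, 1, 1, −1); equivalently, X'' has the law of a uniform random binary string of length n conditioned on its block-count vector equalling m⃗ + e⃗. -/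
/-!
The proof is a double count of triples `(x, p, q)`, where `x` has block counts `m⃗`, a block of
length 5 of `x` starts at `p`, and a block of length 1 starts at `q`. Moving a zero from the first
block to the second gives a string `z` with block counts `m⃗ + e⃗`, in which the lengthened block
has length 2 and the shortened one length 4; moving the zero back recovers `(x, p, q)`
(`move_spec`). Hence each `z` with block counts `m⃗ + e⃗` comes from exactly `(m2 + 1) * (m4 + 1)`
triples (`sum_pairCount`) and other strings come from none (`pairCount_eq_zero`). So `X''` is
uniform, and counting all triples by `x` and by `z` identifies the constant (`card_strSet_mul`).

Strings are handled as infinite words `ext x : ℕ → Bool`. Moving a zero from `p` to `q` is the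
passage between two words with a common deletion: `eraseAt p (ext x) = eraseAt s (ext z)`, where
`s` is the start of the lengthened block in `z`. This reduces `move_spec` to the effect on blocks
of deleting the first zero of a block of length at least two (`isBlock_eraseAt_self`,
`isBlock_eraseAt_of_ne`, `card_starts_eraseAt`).
-/

open scoped Classical
open Finset

noncomputable section

/-- The set of binary strings of length `n` whose numbers of blocks of zeros of lengths
`1, 2, 4, 5` are `m1, m2, m4, m5` respectively. -/
def strSet (n m1 m2 m4 m5 : ℕ) : Finset (Fin n → Bool) :=
  Finset.univ.filter fun x =>
    numBlocks x 1 = m1 ∧ numBlocks x 2 = m2 ∧ numBlocks x 4 = m4 ∧ numBlocks x 5 = m5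

/-- The number of pairs `(p, q)`, with `p` the start of a block of zeros of length 5 of `x` and
`q` the start of a block of zeros of length 1 of `x`, whose associated modification of `x`
(removing a zero from the first block and adding it to the second) produces `z`. -/
def pairCount {n : ℕ} (x z : Fin n → Bool) : ℕ :=
  (((starts x 5) ×ˢ (starts x 1)).filter fun pq => modifyStr x pq.1 pq.2 = z).card

/-- A block of zeros of length `ℓ` starts at position `i` of the infinite word `f`. -/
def IsBlock (f : ℕ → Bool) (ℓ i : ℕ) : Prop :=
  0 < ℓ ∧ (∀ j, i ≤ j → j < i + ℓ → f j = false) ∧ (i = 0 ∨ f (i - 1) = true) ∧ f (i + ℓ) = true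

/-- The infinite word obtained from `f` by deleting the letter at position `p`. -/
def eraseAt (p : ℕ) (f : ℕ → Bool) : ℕ → Bool := fun j => if j < p then f j else f (j + 1)

/-- The position in `f` of the letter that sits at position `i` of `eraseAt p f`. -/
def unshift (p i : ℕ) : ℕ := if i < p then i else i + 1

/-- The position of the lengthened block after removing a zero from the block at `p` and adding
it to the block at `q`. -/
def grown (p q : ℕ) : ℕ := if p < q then q - 1 else q

/-- The position of the shortened block after removing a zero from the block at `p` and adding
it to the block at `q`. -/
def shrunk (p q : ℕ) : ℕ := if p < q then p else p + 1

lemma ext_of_le {n : ℕ} (x : Fin n → Bool) {j : ℕ} (h : n ≤ j) : ext x j = true := by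
  simp [_root_.ext, Nat.not_lt.mpr h]

lemma lt_of_ext {n : ℕ} {x : Fin n → Bool} {j : ℕ} (h : ext x j = false) : j < n := by
  by_contra hj
  rw [ext_of_le x (not_lt.mp hj)] at h
  cases h

lemma ext_injective {n : ℕ} {x y : Fin n → Bool} (h : ext x = ext y) : x = y := by
  funext i
  have := congrFun h i
  simpa [_root_.ext] using this

lemma mem_starts {n : ℕ} (x : Fin n → Bool) (ℓ i : ℕ) :
    i ∈ starts x ℓ ↔ IsBlock (ext x) ℓ i := by
  simp only [starts, blockStart, IsBlock, mem_filter, Finset.mem_range, Finset.mem_Ico, and_imp]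
  constructor
  · rintro ⟨_, h0, _, h1, h2, h3⟩
    exact ⟨h0, h1, h2, h3⟩
  · rintro ⟨h0, h1, h2, h3⟩
    have := lt_of_ext (h1 (i + ℓ - 1) (by omega) (by omega))
    exact ⟨by omega, h0, by omega, h1, h2, h3⟩

lemma IsBlock.length_unique {f : ℕ → Bool} {ℓ ℓ' i : ℕ} (h : IsBlock f ℓ i)
    (h' : IsBlock f ℓ' i) : ℓ = ℓ' := by
  obtain ⟨_, h1, _, h3⟩ := h
  obtain ⟨_, h1', _, h3'⟩ := h'
  rcases lt_trichotomy ℓ ℓ' with hl | hl | hl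
  · rw [h1' (i + ℓ) (by omega) (by omega)] at h3
    cases h3
  · exact hl
  · rw [h1 (i + ℓ') (by omega) (by omega)] at h3'
    cases h3'

lemma IsBlock.apply_start {f : ℕ → Bool} {ℓ i : ℕ} (h : IsBlock f ℓ i) : f i = false :=
  h.2.1 i le_rfl (by have := h.1; omega)

/-- A word is determined by a deletion of it together with the deleted letter. -/
lemma eq_of_eraseAt_eq {f g : ℕ → Bool} {p : ℕ} (h : eraseAt p f = eraseAt p g)
    (hp : f p = g p) : f = g := by
  funext j
  rcases lt_trichotomy j p with hj | hj | hj
  · simpa [eraseAt, hj] using congrFun h j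
  · rw [hj, hp]
  · have := congrFun h (j - 1)
    simpa [eraseAt, show ¬ j - 1 < p by omega, show j - 1 + 1 = j by omega] using this

/-- Deleting a zero at the start of a block of length at least two shortens this block by one,
and conversely. -/
lemma isBlock_eraseAt_self {f : ℕ → Bool} {p L : ℕ} (hL : 0 < L) (hp : f p = false) :
    IsBlock (eraseAt p f) L p ↔ IsBlock f (L + 1) p := by
  simp only [IsBlock, eraseAt]
  constructor
  · rintro ⟨_, h1, h2, h3⟩
    refine ⟨by omega, fun j hj hj' => ?_, ?_, ?_⟩
    · rcases Nat.eq_or_lt_of_le hj with rfl | hlt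
      · exact hp
      · have := h1 (j - 1) (by omega) (by omega)
        rwa [if_neg (by omega), show j - 1 + 1 = j by omega] at this
    · rcases h2 with h2 | h2
      · exact Or.inl h2
      · by_cases h0 : p = 0
        · exact Or.inl h0
        · rw [if_pos (by omega)] at h2
          exact Or.inr h2
    · rwa [if_neg (by omega)] at h3
  · rintro ⟨_, h1, h2, h3⟩
    refine ⟨hL, fun j hj hj' => ?_, ?_, ?_⟩
    · rw [if_neg (by omega)]
      exact h1 _ (by omega) (by omega)
    · rcases h2 with h2 | h2
      · exact Or.inl h2
      · by_cases h0 : p = 0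
        · exact Or.inl h0
        · rw [if_pos (by omega)]
          exact Or.inr h2
    · rwa [if_neg (by omega)]

/-- Deleting a zero at the start of a block of length at least two leaves every other block
intact up to the shift of positions. -/
lemma isBlock_eraseAt_of_ne {f : ℕ → Bool} {p L : ℕ} (hL : 0 < L) (hf : IsBlock f (L + 1) p)
    {ℓ i : ℕ} (hi : i ≠ p) : IsBlock (eraseAt p f) ℓ i ↔ IsBlock f ℓ (unshift p i) := by
  obtain ⟨_, h1, h2, h3⟩ := hf
  have hp0 := h1 p le_rfl (by omega)
  have hp1 := h1 (p + 1) (by omega) (by omega)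
  rcases lt_or_gt_of_ne hi with hlt | hgt
  · have hu : unshift p i = i := if_pos hlt
    rw [hu]
    have h2' : f (p - 1) = true := h2.resolve_left (by omega)
    simp only [IsBlock, eraseAt]
    constructor
    · rintro ⟨k0, k1, k2, k3⟩
      -- the one at `p - 1` keeps the block to the left of `p`
      have hlen : i + ℓ < p := by
        by_contra hge
        have := k1 (p - 1) (by omega) (by omega)
        rw [if_pos (by omega), h2'] at this
        cases this
      refine ⟨k0, fun j hj hj' => ?_, ?_, ?_⟩
      · have := k1 j hj hj'
        rwa [if_pos (by omega)] at this
      · rwa [if_pos (by omega)] at k2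
      · rwa [if_pos (by omega)] at k3
    · rintro ⟨k0, k1, k2, k3⟩
      have hlen : i + ℓ < p := by
        by_contra hge
        have := k1 (p - 1) (by omega) (by omega)
        rw [h2'] at this
        cases this
      refine ⟨k0, fun j hj hj' => ?_, ?_, ?_⟩
      · rw [if_pos (by omega)]
        exact k1 j hj hj'
      · rwa [if_pos (by omega)]
      · rwa [if_pos (by omega)]
  · have hu : unshift p i = i + 1 := if_neg (by omega)
    rw [hu]
    simp only [IsBlock, eraseAt]
    constructor
    · rintro ⟨k0, k1, k2, k3⟩
      refine ⟨k0, fun j hj hj' => ?_, Or.inr ?_, ?_⟩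
      · have := k1 (j - 1) (by omega) (by omega)
        rwa [if_neg (by omega), show j - 1 + 1 = j by omega] at this
      · have := k2.resolve_left (by omega)
        rwa [if_neg (by omega), show i - 1 + 1 = i + 1 - 1 by omega] at this
      · rw [if_neg (by omega)] at k3
        rwa [show i + 1 + ℓ = i + ℓ + 1 by omega]
    · rintro ⟨k0, k1, k2, k3⟩
      refine ⟨k0, fun j hj hj' => ?_, Or.inr ?_, ?_⟩
      · rw [if_neg (by omega)]
        exact k1 _ (by omega) (by omega)
      · have := k2.resolve_left (by omega)
        rwa [if_neg (by omega), show i - 1 + 1 = i + 1 - 1 by omega]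
      · rwa [if_neg (by omega), show i + ℓ + 1 = i + 1 + ℓ by omega]

/-- Block counts before and after deleting a zero at the start of a block of length `L + 1`. -/
lemma card_starts_eraseAt {n : ℕ} (x : Fin n → Bool) {p L : ℕ} (hL : 0 < L)
    (hx : IsBlock (ext x) (L + 1) p) (ℓ : ℕ) :
    (starts x ℓ).card + (if ℓ = L then 1 else 0) =
      ((Finset.range n).filter (IsBlock (eraseAt p (ext x)) ℓ)).card +
        (if ℓ = L + 1 then 1 else 0) := by
  set w := eraseAt p (ext x) with hw
  have hwb : IsBlock w L p := (isBlock_eraseAt_self hL hx.apply_start).2 hx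
  have hpn : p < n := lt_of_ext hx.apply_start
  have hpx : p ∈ starts x ℓ ↔ ℓ = L + 1 := by
    rw [mem_starts]
    exact ⟨fun h => h.length_unique hx, fun h => h ▸ hx⟩
  have hpw : p ∈ (Finset.range n).filter (IsBlock w ℓ) ↔ ℓ = L := by
    rw [mem_filter, Finset.mem_range]
    exact ⟨fun h => h.2.length_unique hwb, fun h => ⟨hpn, h ▸ hwb⟩⟩
  have key : (((Finset.range n).filter (IsBlock w ℓ)).erase p).card
      = ((starts x ℓ).erase p).card := by
    refine Finset.card_bij (fun i _ => unshift p i) ?_ ?_ ?_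
    · intro i hi
      rw [mem_erase, mem_filter] at hi
      rw [mem_erase, mem_starts]
      refine ⟨?_, (isBlock_eraseAt_of_ne hL hx hi.1).1 hi.2.2⟩
      have := hi.1
      unfold unshift
      split_ifs <;> omega
    · intro i _ j _ h
      unfold unshift at h
      split_ifs at h <;> omega
    · intro j hj
      rw [mem_erase, mem_starts] at hj
      have hjn : j < n := lt_of_ext hj.2.apply_start
      -- position `p + 1` is preceded by a zero, so no block starts there
      have hj1 : j ≠ p + 1 := by
        rintro rfl
        have := hj.2.2.2.1.resolve_left (by omega)
        rw [Nat.add_sub_cancel, hx.apply_start] at this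
        cases this
      have hu : unshift p (if j < p then j else j - 1) = j := by
        have := hj.1
        unfold unshift
        split_ifs <;> omega
      have hne : (if j < p then j else j - 1) ≠ p := by
        split_ifs <;> omega
      refine ⟨if j < p then j else j - 1, ?_, hu⟩
      rw [mem_erase, mem_filter, Finset.mem_range]
      refine ⟨hne, by split_ifs <;> omega, ?_⟩
      rw [hw, isBlock_eraseAt_of_ne hL hx hne, hu]
      exact hj.2
  rw [card_erase_eq_ite, card_erase_eq_ite] at key
  simp only [hpx, hpw] at key
  have c1 : ℓ = L + 1 → 0 < (starts x ℓ).card := fun h => card_pos.2 ⟨p, hpx.2 h⟩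
  have c2 : ℓ = L → 0 < ((Finset.range n).filter (IsBlock w ℓ)).card :=
    fun h => card_pos.2 ⟨p, hpw.2 h⟩
  split_ifs at key ⊢ <;> omega

/-- The modified string carries a zero at `grown p q`, and deleting it gives the same word as
deleting position `p` of the original string. -/
lemma ext_modifyStr {n : ℕ} (x : Fin n → Bool) {p q : ℕ} (hp : p < n) (hq : q < n) :
    ext (modifyStr x p q) (grown p q) = false ∧
      eraseAt (grown p q) (ext (modifyStr x p q)) = eraseAt p (ext x) := by
  have hg : grown p q < n := by unfold grown; split_ifs <;> omega
  have hval : ∀ j < n, ext (modifyStr x p q) j =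
      if j < grown p q then eraseAt p (ext x) j else
        if j = grown p q then false else eraseAt p (ext x) (j - 1) := by
    intro j hj
    simp only [_root_.ext, hj, dif_pos, modifyStr, List.getD_eq_getElem?_getD]
    rw [show (if p < q then q - 1 else q) = grown p q from rfl]
    rw [List.getElem?_insertIdx]
    simp only [List.getElem?_eraseIdx, List.getElem?_ofFn, eraseAt, List.length_eraseIdx,
      List.length_ofFn]
    split_ifs <;> first | omega | simp_all [_root_.ext]
  refine ⟨by rw [hval _ hg]; simp, ?_⟩
  funext j
  by_cases hj : j < grown p q
  · rw [eraseAt, if_pos hj, hval j (by omega), if_pos hj]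
  · rw [eraseAt, if_neg hj]
    by_cases hjn : j + 1 < n
    · rw [hval _ hjn, if_neg (by omega), if_neg (by omega), Nat.add_sub_cancel]
    · rw [ext_of_le _ (by omega), eraseAt]
      rw [if_neg (by omega), ext_of_le _ (by omega)]

/-- Moving a zero from a block of length `a + 1` at `p` to a block of length `b` at `q` yields
blocks of lengths `b + 1` and `a`, and moving the zero back restores the original string. -/
lemma move_spec {n a b : ℕ} (ha : 0 < a) (hab : a + 1 ≠ b) {x : Fin n → Bool} {p q : ℕ}
    (hp : p ∈ starts x (a + 1)) (hq : q ∈ starts x b) :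
    grown p q ∈ starts (modifyStr x p q) (b + 1) ∧ shrunk p q ∈ starts (modifyStr x p q) a ∧
      modifyStr (modifyStr x p q) (grown p q) (shrunk p q) = x ∧
      grown (grown p q) (shrunk p q) = p ∧ shrunk (grown p q) (shrunk p q) = q ∧
      ∀ ℓ, numBlocks (modifyStr x p q) ℓ + (if ℓ = b then 1 else 0)
          + (if ℓ = a + 1 then 1 else 0) =
        numBlocks x ℓ + (if ℓ = a then 1 else 0) + (if ℓ = b + 1 then 1 else 0) := by
  rw [mem_starts] at hp hq
  have hb : 0 < b := hq.1
  have hne : p ≠ q := by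
    rintro rfl
    exact hab (hp.length_unique hq)
  -- the letter just after the start `p` is a zero, so `q` cannot be `p + 1`
  have hne1 : q ≠ p + 1 := by
    rintro rfl
    have := hq.2.2.1.resolve_left (by omega)
    rw [Nat.add_sub_cancel, hp.apply_start] at this
    cases this
  have hpn := lt_of_ext hp.apply_start
  have hqn := lt_of_ext hq.apply_start
  obtain ⟨hz0, hzw⟩ := ext_modifyStr x hpn hqn
  set z := modifyStr x p q with hz
  have hgp : grown p q ≠ p := by unfold grown; split_ifs <;> omega
  have hug : unshift p (grown p q) = q := by unfold unshift grown; split_ifs <;> omega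
  have hus : unshift (grown p q) p = shrunk p q := by
    unfold unshift grown shrunk; split_ifs <;> omega
  have hgg : grown (grown p q) (shrunk p q) = p := by
    unfold grown shrunk; split_ifs <;> omega
  have hsg : shrunk (grown p q) (shrunk p q) = q := by
    unfold grown shrunk; split_ifs <;> omega
  have hB : IsBlock (ext z) (b + 1) (grown p q) := by
    rw [← isBlock_eraseAt_self hb hz0, hzw, isBlock_eraseAt_of_ne ha hp hgp, hug]
    exact hq
  have hA : IsBlock (ext z) a (shrunk p q) := by
    rw [← hus, ← isBlock_eraseAt_of_ne hb hB hgp.symm, hzw,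
      isBlock_eraseAt_self ha hp.apply_start]
    exact hp
  refine ⟨(mem_starts _ _ _).2 hB, (mem_starts _ _ _).2 hA, ?_, hgg, hsg, fun ℓ => ?_⟩
  · obtain ⟨h0, hw⟩ := ext_modifyStr z (lt_of_ext hB.apply_start) (lt_of_ext hA.apply_start)
    rw [hgg] at h0 hw
    refine ext_injective (eq_of_eraseAt_eq (p := p) (hw.trans hzw) ?_)
    rw [h0, hp.apply_start]
  · have h1 := card_starts_eraseAt x ha hp ℓ
    have h2 := card_starts_eraseAt z hb hB ℓ
    rw [hzw] at h2
    unfold numBlocks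
    omega

/-- Moving a zero from a block of length 5 to a block of length 1 maps `strSet n m⃗` to
`strSet n (m⃗ + e⃗)`. -/
lemma modifyStr_mem {n m1 m2 m4 m5 : ℕ} {x : Fin n → Bool} (hx : x ∈ strSet n m1 m2 m4 m5)
    {p q : ℕ} (hp : p ∈ starts x 5) (hq : q ∈ starts x 1) :
    modifyStr x p q ∈ strSet n (m1 - 1) (m2 + 1) (m4 + 1) (m5 - 1) := by
  obtain ⟨-, -, -, -, -, h⟩ := move_spec (a := 4) (b := 1) (by norm_num) (by norm_num) hp hq
  have h1 := h 1
  have h2 := h 2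
  have h4 := h 4
  have h5 := h 5
  norm_num at h1 h2 h4 h5
  simp only [strSet, mem_filter, mem_univ, true_and] at hx ⊢
  omega

/-- Every string with block counts `m⃗ + e⃗` arises from exactly `(m2 + 1) * (m4 + 1)` triples
`(x, p, q)`: one for each choice of a block of length 2 and a block of length 4 in it. -/
lemma sum_pairCount {n m1 m2 m4 m5 : ℕ} (hm1 : 1 ≤ m1) (hm5 : 1 ≤ m5) {z : Fin n → Bool}
    (hz : z ∈ strSet n (m1 - 1) (m2 + 1) (m4 + 1) (m5 - 1)) :
    ∑ x ∈ strSet n m1 m2 m4 m5, pairCount x z = (m2 + 1) * (m4 + 1) := by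
  have hz' := hz
  simp only [strSet, mem_filter, mem_univ, true_and] at hz'
  obtain ⟨z1, z2, z4, z5⟩ := hz'
  unfold pairCount
  rw [← card_sigma, ← z2, ← z4, numBlocks, numBlocks, ← card_product]
  refine Finset.card_bij'
    (fun t _ => (grown t.2.1 t.2.2, shrunk t.2.1 t.2.2))
    (fun st _ => ⟨modifyStr z st.1 st.2, (grown st.1 st.2, shrunk st.1 st.2)⟩) ?_ ?_ ?_ ?_
  · rintro ⟨x, p, q⟩ h
    simp only [mem_sigma, mem_filter, mem_product] at h ⊢
    obtain ⟨-, ⟨hp, hq⟩, rfl⟩ := h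
    obtain ⟨h1, h2, -⟩ := move_spec (a := 4) (b := 1) (by norm_num) (by norm_num) hp hq
    exact ⟨h1, h2⟩
  · rintro ⟨s, t⟩ h
    simp only [mem_sigma, mem_filter, mem_product] at h ⊢
    obtain ⟨h1, h2, h3, -, -, h6⟩ :=
      move_spec (a := 1) (b := 4) (by norm_num) (by norm_num) h.1 h.2
    refine ⟨?_, ⟨h1, h2⟩, h3⟩
    have k1 := h6 1
    have k2 := h6 2
    have k4 := h6 4
    have k5 := h6 5
    norm_num at k1 k2 k4 k5
    simp only [strSet, mem_filter, mem_univ, true_and]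
    omega
  · rintro ⟨x, p, q⟩ h
    simp only [mem_sigma, mem_filter, mem_product] at h
    obtain ⟨-, ⟨hp, hq⟩, rfl⟩ := h
    obtain ⟨-, -, h3, h4, h5, -⟩ := move_spec (a := 4) (b := 1) (by norm_num) (by norm_num) hp hq
    simp only [h3, h4, h5]
  · rintro ⟨s, t⟩ h
    simp only [mem_product] at h
    obtain ⟨-, -, -, h4, h5, -⟩ :=
      move_spec (a := 1) (b := 4) (by norm_num) (by norm_num) h.1 h.2
    simp only [h4, h5]

lemma pairCount_eq_zero {n m1 m2 m4 m5 : ℕ} {x z : Fin n → Bool}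
    (hx : x ∈ strSet n m1 m2 m4 m5)
    (hz : z ∉ strSet n (m1 - 1) (m2 + 1) (m4 + 1) (m5 - 1)) : pairCount x z = 0 := by
  rw [pairCount, card_eq_zero, filter_eq_empty_iff]
  rintro ⟨p, q⟩ h rfl
  rw [mem_product] at h
  exact hz (modifyStr_mem hx h.1 h.2)

/-- Double count of the triples `(x, p, q)`, by `x` and by the resulting string. -/
lemma card_strSet_mul {n m1 m2 m4 m5 : ℕ} (hm1 : 1 ≤ m1) (hm5 : 1 ≤ m5) :
    (strSet n m1 m2 m4 m5).card * (m5 * m1) =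
      (strSet n (m1 - 1) (m2 + 1) (m4 + 1) (m5 - 1)).card * ((m2 + 1) * (m4 + 1)) := by
  have h1 : ∀ x ∈ strSet n m1 m2 m4 m5,
      ∑ z ∈ strSet n (m1 - 1) (m2 + 1) (m4 + 1) (m5 - 1), pairCount x z = m5 * m1 := by
    intro x hx
    have hx' := hx
    simp only [strSet, mem_filter, mem_univ, true_and] at hx'
    unfold pairCount
    rw [← card_eq_sum_card_fiberwise, card_product, ← hx'.1, ← hx'.2.2.2, numBlocks, numBlocks]
    rintro ⟨p, q⟩ h
    rw [mem_coe, mem_product] at h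
    exact modifyStr_mem hx h.1 h.2
  rw [← smul_eq_mul, ← sum_const, ← sum_congr rfl h1, sum_comm,
    sum_congr rfl fun z hz => sum_pairCount hm1 hm5 hz, sum_const, smul_eq_mul]

/-- if `X'` is uniform on the strings with block-count vector
`m⃗ = (m1, m2, m4, m5)` (with `m1, m5 ≥ 1`) and `X''` is obtained from `X'` by removing a zero
from a uniformly chosen block of zeros of length 5 and adding it to a uniformly chosen block of
zeros of length 1, then `X''` is uniform on the strings with block-count vector `m⃗ + e⃗`,
`e⃗ = (-1, 1, 1, -1)`. -/
theorem modified_string_is_uniform (n m1 m2 m4 m5 : ℕ) (hm1 : 1 ≤ m1) (hm5 : 1 ≤ m5)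
    (hne : (strSet n m1 m2 m4 m5).Nonempty) :
    ∀ z : Fin n → Bool,
      (∑ x ∈ strSet n m1 m2 m4 m5, (pairCount x z : ℝ) / ((m5 : ℝ) * (m1 : ℝ)))
          / ((strSet n m1 m2 m4 m5).card : ℝ)
        = if z ∈ strSet n (m1 - 1) (m2 + 1) (m4 + 1) (m5 - 1)
          then 1 / ((strSet n (m1 - 1) (m2 + 1) (m4 + 1) (m5 - 1)).card : ℝ) else 0 := by
  intro z
  have hm1' : (m1 : ℝ) ≠ 0 := by positivity
  have hm5' : (m5 : ℝ) ≠ 0 := by positivity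
  have hS : ((strSet n m1 m2 m4 m5).card : ℝ) ≠ 0 := by
    exact_mod_cast (card_pos.2 hne).ne'
  rw [← sum_div, ← Nat.cast_sum]
  split_ifs with hz
  · have hT : ((strSet n (m1 - 1) (m2 + 1) (m4 + 1) (m5 - 1)).card : ℝ) ≠ 0 := by
      exact_mod_cast (card_pos.2 ⟨z, hz⟩).ne'
    have h : ((strSet n m1 m2 m4 m5).card : ℝ) * (m5 * m1) =
        (strSet n (m1 - 1) (m2 + 1) (m4 + 1) (m5 - 1)).card * ((m2 + 1) * (m4 + 1)) := by
      exact_mod_cast card_strSet_mul hm1 hm5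
    rw [sum_pairCount hm1 hm5 hz]
    push_cast
    rw [div_div, div_eq_div_iff (by positivity) hT]
    linarith
  · rw [sum_eq_zero fun x hx => pairCount_eq_zero hx hz]
    simp
end
end

section
/- With μ_i = E[N_i], one has P(|N_i − μ_i| ≤ √(55n/4) for every i ∈ {1, 2, 4, 5}) ≥ 1/5; in particular, P(N⃗ ∈ Iⁿ) ≥ 1/5. -/
/-!
The four counts are controlled by Chebyshev's inequality and a union bound, and the variances by
the Efron–Stein inequality. Changing one letter of a string destroys at most two blocks of zeros
of a given length `ℓ`: if the letter is a zero, only the block that contains it; if it is a one,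
only the block that ends just before it and the one that starts just after it
(`numBlocks_update_le`). So `N_ℓ` changes by at most `2`, and any function of `n` fair bits with
this property has variance at most `n` (`variance_bound`, by induction on `n`: averaging over the
first bit preserves the property and costs at most `1` of variance). Hence each of the four events
`|N_ℓ - μ_ℓ| > √(55n/4)` has probability at most `4/55`, and `1 - 16/55 ≥ 1/5`.
-/

open scoped Classical
open Finset

noncomputable section

lemma ext_update_of_ne {n : ℕ} (x : Fin n → Bool) (k : Fin n) (b : Bool) {j : ℕ}
    (h : j ≠ k) : ext (Function.update x k b) j = ext x j := by
  unfold _root_.ext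
  split_ifs with hj
  · rw [Function.update_of_ne]
    intro h'
    exact h (congrArg Fin.val h')
  · rfl

/-- A block of `x` whose closed neighbourhood `[i-1, i+ℓ]` avoids `k` survives a change at `k`. -/
lemma blockStart_update {n : ℕ} (x : Fin n → Bool) (k : Fin n) (b : Bool) {ℓ i : ℕ}
    (h : blockStart x ℓ i) (hk : (k : ℕ) + 1 < i ∨ i + ℓ < k) :
    blockStart (Function.update x k b) ℓ i := by
  obtain ⟨h0, h1, h2, h3, h4⟩ := h
  refine ⟨h0, h1, ?_, ?_, ?_⟩
  · intro j hj
    rw [ext_update_of_ne _ _ _ _, h2 j hj]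
    rw [Finset.mem_Ico] at hj
    omega
  · rcases h3 with h3 | h3
    · exact Or.inl h3
    · right
      rw [ext_update_of_ne _ _ _ (by omega), h3]
  · rw [ext_update_of_ne _ _ _ (by omega), h4]

/-- Two distinct blocks of the same length cannot both contain the position `k`. -/
lemma blockStart_unique {n : ℕ} (x : Fin n → Bool) {ℓ i j k : ℕ}
    (hi : blockStart x ℓ i) (hj : blockStart x ℓ j)
    (hik : k ∈ Finset.Ico i (i + ℓ)) (hjk : k ∈ Finset.Ico j (j + ℓ)) : i = j := by
  rw [Finset.mem_Ico] at hik hjk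
  obtain ⟨-, -, a2, -, a4⟩ := hi
  obtain ⟨-, -, b2, -, b4⟩ := hj
  rcases lt_trichotomy i j with h | h | h
  · -- the delimiter after the block at `i` would be a zero of the block at `j`
    have := b2 (i + ℓ) (by rw [Finset.mem_Ico]; omega)
    rw [a4] at this
    cases this
  · exact h
  · have := a2 (j + ℓ) (by rw [Finset.mem_Ico]; omega)
    rw [b4] at this
    cases this

lemma numBlocks_update_le {n : ℕ} (x : Fin n → Bool) (k : Fin n) (b : Bool) (ℓ : ℕ) :
    numBlocks x ℓ ≤ numBlocks (Function.update x k b) ℓ + 2 := by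
  unfold numBlocks
  have key : (starts x ℓ \ starts (Function.update x k b) ℓ).card ≤ 2 := by
    have hmem : ∀ i ∈ starts x ℓ \ starts (Function.update x k b) ℓ,
        blockStart x ℓ i ∧ i ≤ (k : ℕ) + 1 ∧ (k : ℕ) ≤ i + ℓ := by
      intro i hi
      simp only [starts, Finset.mem_sdiff, Finset.mem_filter, not_and] at hi
      refine ⟨hi.1.2, ?_, ?_⟩ <;> by_contra hc
      · exact hi.2 hi.1.1 (blockStart_update x k b hi.1.2 (by omega))
      · exact hi.2 hi.1.1 (blockStart_update x k b hi.1.2 (by omega))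
    cases hx : ext x k with
    | true =>
      refine (Finset.card_le_card (t := {(k : ℕ) + 1, (k : ℕ) - ℓ}) ?_).trans Finset.card_le_two
      intro i hi
      obtain ⟨h, h1, h2⟩ := hmem i hi
      have : ¬ (k : ℕ) ∈ Finset.Ico i (i + ℓ) := by
        intro hm
        have := h.2.2.1 _ hm
        rw [hx] at this
        cases this
      simp only [Finset.mem_Ico, Finset.mem_insert, Finset.mem_singleton] at this ⊢
      omega
    | false =>
      have hin : ∀ i ∈ starts x ℓ \ starts (Function.update x k b) ℓ,
          (k : ℕ) ∈ Finset.Ico i (i + ℓ) := by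
        intro i hi
        obtain ⟨⟨-, -, -, h3, h4⟩, h1, h2⟩ := hmem i hi
        have e1 : (k : ℕ) ≠ i + ℓ := by
          intro e
          rw [← e, hx] at h4
          cases h4
        have e2 : i ≠ (k : ℕ) + 1 := by
          rintro rfl
          simp [hx] at h3
        rw [Finset.mem_Ico]
        omega
      refine (Finset.card_le_one.2 fun i hi j hj => ?_).trans one_le_two
      exact blockStart_unique x (hmem i hi).1 (hmem j hj).1 (hin i hi) (hin j hj)
  have := Finset.card_le_card_sdiff_add_card (s := starts x ℓ)
    (t := starts (Function.update x k b) ℓ)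
  omega

lemma abs_numBlocks_update_sub_le {n : ℕ} (x : Fin n → Bool) (k : Fin n) (b : Bool) (ℓ : ℕ) :
    |(numBlocks (Function.update x k b) ℓ : ℝ) - numBlocks x ℓ| ≤ 2 := by
  have h1 := numBlocks_update_le x k b ℓ
  have h2 := numBlocks_update_le (Function.update x k b) k (x k) ℓ
  rw [Function.update_idem, Function.update_eq_self] at h2
  have h1' : (numBlocks x ℓ : ℝ) ≤ numBlocks (Function.update x k b) ℓ + 2 := by exact_mod_cast h1
  have h2' : (numBlocks (Function.update x k b) ℓ : ℝ) ≤ numBlocks x ℓ + 2 := by exact_mod_cast h2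
  rw [abs_le]
  constructor <;> linarith

lemma sum_cons {n : ℕ} (F : (Fin (n + 1) → Bool) → ℝ) :
    ∑ x, F x = ∑ x : Fin n → Bool,
      (F (Fin.cons true x : Fin (n + 1) → Bool) + F (Fin.cons false x : Fin (n + 1) → Bool)) := by
  rw [← (Fin.consEquiv (fun _ : Fin (n + 1) => Bool)).sum_comp, Fintype.sum_prod_type,
    Fintype.sum_bool, ← Finset.sum_add_distrib]
  rfl

/-- Efron–Stein for bounded differences, multiplied through by `4 ^ n`: a function of `n` fair
bits that changes by at most `2` with each bit has variance at most `n`. -/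
lemma variance_bound (n : ℕ) : ∀ f : (Fin n → Bool) → ℝ,
    (∀ x k b, |f (Function.update x k b) - f x| ≤ 2) →
    2 ^ n * ∑ x, f x ^ 2 - (∑ x, f x) ^ 2 ≤ n * 4 ^ n := by
  induction n with
  | zero =>
    intro f _
    simp
  | succ n ih =>
    intro f hf
    set g : (Fin n → Bool) → ℝ := fun x =>
      (f (Fin.cons true x : Fin (n + 1) → Bool) + f (Fin.cons false x : Fin (n + 1) → Bool)) / 2
      with hg
    have hgd : ∀ x k b, |g (Function.update x k b) - g x| ≤ 2 := by
      intro x k b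
      have h1 := hf (Fin.cons true x : Fin (n + 1) → Bool) k.succ b
      have h2 := hf (Fin.cons false x : Fin (n + 1) → Bool) k.succ b
      rw [← Fin.cons_update, abs_le] at h1 h2
      simp only [hg]
      rw [abs_le]
      constructor <;> linarith [h1.1, h1.2, h2.1, h2.2]
    have hsum : ∑ x, f x = 2 * ∑ x, g x := by
      rw [sum_cons, Finset.mul_sum]
      refine Finset.sum_congr rfl fun x _ => ?_
      simp only [hg]
      ring
    have hsq : ∑ x, f x ^ 2 ≤ 2 * ∑ x, g x ^ 2 + 2 * 2 ^ n := by
      have hc : (2 : ℝ) * 2 ^ n = ∑ _x : Fin n → Bool, (2 : ℝ) := by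
        simp [mul_comm]
      rw [sum_cons, hc, Finset.mul_sum, ← Finset.sum_add_distrib]
      refine Finset.sum_le_sum fun x _ => ?_
      have h := hf (Fin.cons false x : Fin (n + 1) → Bool) 0 true
      rw [Fin.update_cons_zero] at h
      have h' := sq_le_sq' (abs_le.1 h).1 (abs_le.1 h).2
      -- `a² + b² = 2 ((a+b)/2)² + (a-b)²/2`, and `(a-b)² ≤ 4`
      simp only [hg]
      nlinarith
    have h4 : (4 : ℝ) ^ n = 2 ^ n * 2 ^ n := by rw [← mul_pow]; norm_num
    have hm := mul_le_mul_of_nonneg_left hsq (by positivity : (0 : ℝ) ≤ 2 ^ (n + 1))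
    have hi := ih g hgd
    rw [hsum]
    rw [h4] at hi
    rw [pow_succ (4 : ℝ), h4]
    rw [pow_succ] at hm ⊢
    push_cast
    nlinarith

/-- Chebyshev's inequality for a function with bounded differences, as a count of strings. -/
lemma card_deviation_le {n : ℕ} (hn : 0 < n) (f : (Fin n → Bool) → ℝ)
    (hf : ∀ x k b, |f (Function.update x k b) - f x| ≤ 2) :
    ((univ.filter fun x => ¬ |f x - expX n f| ≤ Real.sqrt (55 * n / 4)).card : ℝ)
      ≤ 4 / 55 * 2 ^ n := by
  have hn' : (0 : ℝ) < n := by exact_mod_cast hn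
  have hp : (0 : ℝ) < 2 ^ n := by positivity
  have h4 : (4 : ℝ) ^ n = 2 ^ n * 2 ^ n := by rw [← mul_pow]; norm_num
  have hv := variance_bound n f hf
  set m := expX n f with hm
  have hS : ∑ x, f x = m * 2 ^ n := by
    rw [hm, expX]
    field_simp
  have hvar : ∑ x, (f x - m) ^ 2 ≤ n * 2 ^ n := by
    have e : ∑ x, (f x - m) ^ 2 = ∑ x, f x ^ 2 - m ^ 2 * 2 ^ n := by
      have : ∀ x, (f x - m) ^ 2 = f x ^ 2 - 2 * m * f x + m ^ 2 := fun x => by ring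
      simp only [this, Finset.sum_add_distrib, Finset.sum_sub_distrib, ← Finset.mul_sum, hS]
      simp
      ring
    rw [e]
    rw [hS, h4] at hv
    refine le_of_mul_le_mul_left ?_ hp
    nlinarith
  set B := univ.filter fun x => ¬ |f x - m| ≤ Real.sqrt (55 * n / 4) with hB
  have hlow : (B.card : ℝ) * (55 * n / 4) ≤ ∑ x, (f x - m) ^ 2 := by
    rw [← nsmul_eq_mul]
    refine (Finset.card_nsmul_le_sum B (fun x => (f x - m) ^ 2) _ fun x hx => ?_).trans
      (Finset.sum_le_sum_of_subset_of_nonneg (Finset.subset_univ _) fun _ _ _ => sq_nonneg _)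
    rw [hB, Finset.mem_filter] at hx
    have := (Real.sqrt_lt' (lt_of_le_of_lt (Real.sqrt_nonneg _) (not_le.1 hx.2))).1 (not_le.1 hx.2)
    rw [sq_abs] at this
    exact this.le
  have := hlow.trans hvar
  refine le_of_mul_le_mul_left ?_ hn'
  linarith

/-- with `μ_ℓ = E[N_ℓ]`, the probability that
`|N_ℓ - μ_ℓ| ≤ √(55n/4)` for every `ℓ ∈ {1, 2, 4, 5}` is at least `1/5`
(in particular `P(N⃗ ∈ Iⁿ) ≥ 1/5`). -/
theorem prob_block_counts_concentrate (n : ℕ) :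
    (1 : ℝ) / 5 ≤ probX n (fun x => ∀ ℓ ∈ ({1, 2, 4, 5} : Finset ℕ),
      |(numBlocks x ℓ : ℝ) - expX n (fun z => (numBlocks z ℓ : ℝ))|
        ≤ Real.sqrt (55 * n / 4)) := by
  rcases Nat.eq_zero_or_pos n with rfl | hn
  · -- for `n = 0` the only string has no blocks, so the event is certain
    simp only [probX, expX, numBlocks, starts]
    norm_num
  · have hp : (0 : ℝ) < 2 ^ n := by positivity
    rw [probX, le_div_iff₀ hp]
    set P : ℕ → (Fin n → Bool) → Prop := fun ℓ x =>
      |(numBlocks x ℓ : ℝ) - expX n (fun z => (numBlocks z ℓ : ℝ))| ≤ Real.sqrt (55 * n / 4)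
      with hP
    have hbad : ∀ ℓ, ((univ.filter fun x => ¬ P ℓ x).card : ℝ) ≤ 4 / 55 * 2 ^ n := fun ℓ =>
      card_deviation_le hn (fun x => (numBlocks x ℓ : ℝ))
        fun x k b => abs_numBlocks_update_sub_le x k b ℓ
    have hunion : (univ.filter fun x => ¬ ∀ ℓ ∈ ({1, 2, 4, 5} : Finset ℕ), P ℓ x).card
        ≤ ∑ ℓ ∈ ({1, 2, 4, 5} : Finset ℕ), (univ.filter fun x => ¬ P ℓ x).card := by
      refine (Finset.card_le_card ?_).trans Finset.card_biUnion_le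
      intro x hx
      simpa only [Finset.mem_filter, Finset.mem_biUnion, Finset.mem_univ, true_and, not_forall,
        exists_prop] using hx
    have hunion' : ((univ.filter fun x => ¬ ∀ ℓ ∈ ({1, 2, 4, 5} : Finset ℕ), P ℓ x).card : ℝ)
        ≤ 16 / 55 * 2 ^ n := by
      refine (Nat.cast_le.2 hunion).trans ?_
      push_cast
      refine (Finset.sum_le_sum fun ℓ _ => hbad ℓ).trans ?_
      rw [Finset.sum_const, nsmul_eq_mul]
      norm_num
      linarith
    have htot := Finset.card_filter_add_card_filter_not (s := (univ : Finset (Fin n → Bool)))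
      (fun x => ∀ ℓ ∈ ({1, 2, 4, 5} : Finset ℕ), P ℓ x)
    have htot' : ((univ.filter fun x => ∀ ℓ ∈ ({1, 2, 4, 5} : Finset ℕ), P ℓ x).card : ℝ)
        + (univ.filter fun x => ¬ ∀ ℓ ∈ ({1, 2, 4, 5} : Finset ℕ), P ℓ x).card = 2 ^ n := by
      have : Fintype.card (Fin n → Bool) = 2 ^ n := by simp
      rw [Finset.card_univ, this] at htot
      exact_mod_cast htot
    linarith
end
end
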